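/- arXiv:1207.5201 — 3 statements merged into one kernel-verified Lean document; each statement's English description precedes it below -/
import Mathlib

section
/- Let n ≥ 1, α > 0, and let f : [0, α) → ℝ be a continuous function with f(t) ≠ 0 for all t ∈ [0, α). If the function g(t) = t / f(t) is n-monotone on (0, α), then f(0) ≥ 0 and f is ⌊n/2⌋-concave on [0, α). -/
open Matrix
open scoped ComplexOrder

/-- A real function `h` is `n`-monotone on a set `I ⊆ ℝ` if for all Hermitian `n × n`
complex matrices `A, B` with spectrum (i.e. all eigenvalues) in `I`, `A ≤ B` in the
Loewner order (i.e. `B − A` positive semidefinite) implies `h(A) ≤ h(B)`, where `h` is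
applied via the continuous functional calculus `cfc`. -/
def NMonotoneOn (n : ℕ) (h : ℝ → ℝ) (I : Set ℝ) : Prop :=
  ∀ A B : Matrix (Fin n) (Fin n) ℂ, A.IsHermitian → B.IsHermitian →
    spectrum ℝ A ⊆ I → spectrum ℝ B ⊆ I →
    (B - A).PosSemidef → (cfc h B - cfc h A).PosSemidef

/-- A real function `h` is `n`-concave on a set `I ⊆ ℝ` if for all Hermitian `n × n`
complex matrices `A, B` with spectrum in `I` and all `λ ∈ [0,1]`,
`h(λA + (1−λ)B) ≥ λ h(A) + (1−λ) h(B)` in the Loewner order. -/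
def NConcaveOn (n : ℕ) (h : ℝ → ℝ) (I : Set ℝ) : Prop :=
  ∀ A B : Matrix (Fin n) (Fin n) ℂ, A.IsHermitian → B.IsHermitian →
    spectrum ℝ A ⊆ I → spectrum ℝ B ⊆ I →
    ∀ l : ℝ, l ∈ Set.Icc (0 : ℝ) 1 →
      (cfc h (l • A + (1 - l) • B) - (l • cfc h A + (1 - l) • cfc h B)).PosSemidef

namespace Matrix

open scoped MatrixOrder

/-- A function on a finite set of reals agrees with a polynomial, so the functional calculus of
two Hermitian matrices is given by evaluating a common polynomial. -/
lemma IsHermitian.exists_polynomial_cfc_eq {ι κ : Type*} [Fintype ι] [DecidableEq ι] [Fintype κ]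
    [DecidableEq κ] {A : Matrix ι ι ℂ} {B : Matrix κ κ ℂ} (hA : A.IsHermitian)
    (hB : B.IsHermitian) (f : ℝ → ℝ) :
    ∃ p : Polynomial ℝ, cfc f A = Polynomial.aeval A p ∧ cfc f B = Polynomial.aeval B p := by
  set s := (A.finite_real_spectrum.union B.finite_real_spectrum).toFinset with hs
  have key : ∀ x ∈ spectrum ℝ A ∪ spectrum ℝ B,
      f x = (Lagrange.interpolate s id f).eval x := fun x hx ↦
    (Lagrange.eval_interpolate_at_node (v := id) f (Set.injOn_id _)
      (by rw [hs, Set.Finite.mem_toFinset]; exact hx)).symm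
  refine ⟨Lagrange.interpolate s id f, ?_, ?_⟩
  · rw [← cfc_polynomial _ A hA]
    exact cfc_congr fun x hx ↦ key x (.inl hx)
  · rw [← cfc_polynomial _ B hB]
    exact cfc_congr fun x hx ↦ key x (.inr hx)

/-- The functional calculus respects intertwining relations. -/
lemma IsHermitian.cfc_mul_eq_mul_cfc {ι κ : Type*} [Fintype ι] [DecidableEq ι] [Fintype κ]
    [DecidableEq κ] {A : Matrix ι ι ℂ} {B : Matrix κ κ ℂ} {V : Matrix ι κ ℂ} (hA : A.IsHermitian)
    (hB : B.IsHermitian) (hV : A * V = V * B) (f : ℝ → ℝ) : cfc f A * V = V * cfc f B := by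
  obtain ⟨p, hpA, hpB⟩ := hA.exists_polynomial_cfc_eq hB f
  rw [hpA, hpB]
  clear hpA hpB
  induction p using Polynomial.induction_on' with
  | add p q hp hq => simp [Matrix.add_mul, Matrix.mul_add, hp, hq]
  | monomial k c =>
    have hk : A ^ k * V = V * B ^ k := by
      induction k with
      | zero => simp
      | succ k ih => rw [pow_succ, Matrix.mul_assoc, hV, ← Matrix.mul_assoc, ih, pow_succ,
          Matrix.mul_assoc]
    simp [Polynomial.aeval_monomial, Algebra.algebraMap_eq_smul_one, hk]

lemma isHermitian_cfc {ι : Type*} [Fintype ι] [DecidableEq ι] (f : ℝ → ℝ) (A : Matrix ι ι ℂ) :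
    (cfc f A).IsHermitian :=
  cfc_predicate f A

lemma continuousOn_spectrum_real {ι : Type*} [Fintype ι] [DecidableEq ι] (A : Matrix ι ι ℂ)
    (f : ℝ → ℝ) : ContinuousOn f (spectrum ℝ A) :=
  A.finite_real_spectrum.continuousOn f

lemma IsHermitian.posSemidef_smul_one_sub_iff {ι : Type*} [Fintype ι] [DecidableEq ι]
    {A : Matrix ι ι ℂ} (hA : A.IsHermitian) {r : ℝ} :
    (r • (1 : Matrix ι ι ℂ) - A).PosSemidef ↔ ∀ x ∈ spectrum ℝ A, x ≤ r := by
  rw [← le_iff, ← Algebra.algebraMap_eq_smul_one]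
  exact le_algebraMap_iff_spectrum_le (ha := hA)

lemma PosSemidef.spectrum_subset_Icc {ι : Type*} [Fintype ι] [DecidableEq ι]
    {A : Matrix ι ι ℂ} (hA : A.PosSemidef) {r : ℝ}
    (hr : (r • (1 : Matrix ι ι ℂ) - A).PosSemidef) : spectrum ℝ A ⊆ Set.Icc 0 r := fun x hx ↦
  ⟨spectrum_nonneg_of_nonneg hA.nonneg hx,
    hA.1.posSemidef_smul_one_sub_iff.1 hr x hx⟩

lemma posSemidef_of_spectrum_nonneg {ι : Type*} [Fintype ι] [DecidableEq ι]
    {A : Matrix ι ι ℂ} (hA : A.IsHermitian) (h : ∀ x ∈ spectrum ℝ A, 0 ≤ x) : A.PosSemidef := by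
  have h' : 0 ≤ cfc (fun x : ℝ ↦ x) A := cfc_nonneg h
  rw [cfc_id' ℝ A hA.isSelfAdjoint] at h'
  exact nonneg_iff_posSemidef.1 h'

lemma PosDef.spectrum_pos {ι : Type*} [Fintype ι] [DecidableEq ι]
    {A : Matrix ι ι ℂ} (hA : A.PosDef) {x : ℝ} (hx : x ∈ spectrum ℝ A) : 0 < x := by
  refine lt_of_le_of_ne (spectrum_nonneg_of_nonneg hA.posSemidef.nonneg hx) ?_
  rintro rfl
  exact spectrum.zero_notMem ℝ hA.isUnit hx

lemma posDef_cfc {ι : Type*} [Fintype ι] [DecidableEq ι] {A : Matrix ι ι ℂ} (hA : A.IsHermitian)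
    {f : ℝ → ℝ} (hf : ∀ x ∈ spectrum ℝ A, 0 < f x) : (cfc f A).PosDef := by
  have h0 : (cfc f A).PosSemidef :=
    nonneg_iff_posSemidef.1 (cfc_nonneg fun x hx ↦ (hf x hx).le)
  rw [h0.posDef_iff_isUnit]
  exact (isUnit_cfc_iff f A (A.continuousOn_spectrum_real f) hA).2 fun x hx ↦ (hf x hx).ne'

lemma cfc_inv_eq_inv_cfc {ι : Type*} [Fintype ι] [DecidableEq ι] {A : Matrix ι ι ℂ}
    (hA : A.IsHermitian) {f : ℝ → ℝ} (hf : ∀ x ∈ spectrum ℝ A, f x ≠ 0) :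
    cfc (fun x ↦ (f x)⁻¹) A = (cfc f A)⁻¹ := by
  rw [nonsing_inv_eq_ringInverse]
  exact cfc_inv f A hf (A.continuousOn_spectrum_real f) hA

/-- Inversion is antitone on positive definite matrices. -/
lemma PosDef.posSemidef_inv_sub_inv {ι : Type*} [Fintype ι] [DecidableEq ι]
    {M N : Matrix ι ι ℂ} (hM : M.PosDef) (hN : N.PosDef) (h : (N - M).PosSemidef) :
    (M⁻¹ - N⁻¹).PosSemidef := by
  have := hM.isUnit.invertible
  have := hN.isUnit.invertible
  have := hM.inv.isUnit.invertible
  have e1 := hN.fromBlocks₁₁ (1 : Matrix ι ι ℂ) M⁻¹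
  have e2 := PosDef.fromBlocks₂₂ N (1 : Matrix ι ι ℂ) hM.inv
  simp only [conjTranspose_one, Matrix.one_mul, Matrix.mul_one, inv_inv_of_invertible] at e1 e2
  exact e1.1 (e2.2 h)

end Matrix

/-- Hansen's inequality for a function `f` such that `t / f t` is matrix monotone, for invertible
Hermitian contractions. -/
lemma NMonotoneOn.posSemidef_cfc_conj_sub {n : ℕ} {α : ℝ} {f : ℝ → ℝ}
    (hmono : NMonotoneOn n (fun t => t / f t) (Set.Ioo 0 α)) (hf : ∀ t ∈ Set.Ioo 0 α, 0 < f t)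
    {X a : Matrix (Fin n) (Fin n) ℂ} (hX : X.PosDef) {r : ℝ} (hr : r < α)
    (hXr : (r • (1 : Matrix (Fin n) (Fin n) ℂ) - X).PosSemidef)
    (ha : a.IsHermitian) (hau : IsUnit a) (ha1 : (1 - a * a).PosSemidef) :
    (cfc f (a * X * a) - a * cfc f X * a).PosSemidef := by
  set s := cfc Real.sqrt X with hs
  have hsH : sᴴ = s := isHermitian_cfc _ _
  have haH : aᴴ = a := ha
  have hsD : s.PosDef := posDef_cfc hX.1 fun x hx ↦ Real.sqrt_pos.2 (hX.spectrum_pos hx)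
  have hss : s * s = X := by
    rw [hs, ← cfc_mul _ _ X (X.continuousOn_spectrum_real _) (X.continuousOn_spectrum_real _)]
    conv_rhs => rw [← cfc_id' ℝ X hX.1]
    exact cfc_congr fun x hx ↦ Real.mul_self_sqrt (hX.spectrum_pos hx).le
  set W := s * (a * a) * s with hW
  have hWD : W.PosDef := by
    have h := PosDef.conjTranspose_mul_self (a * s)
      (Matrix.mulVec_injective_of_isUnit (hau.mul hsD.isUnit))
    rwa [conjTranspose_mul, hsH, haH, show s * a * (a * s) = W by
      simp only [hW, Matrix.mul_assoc]] at h
  have hXW : (X - W).PosSemidef := by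
    have h := ha1.conjTranspose_mul_mul_same s
    rwa [hsH, Matrix.mul_sub, Matrix.sub_mul, Matrix.mul_one, hss] at h
  have hWr : (r • (1 : Matrix (Fin n) (Fin n) ℂ) - W).PosSemidef := by
    simpa using hXr.add hXW
  have hXs : spectrum ℝ X ⊆ Set.Ioo 0 α := fun x hx ↦
    ⟨hX.spectrum_pos hx, (hX.1.posSemidef_smul_one_sub_iff.1 hXr x hx).trans_lt hr⟩
  have hWs : spectrum ℝ W ⊆ Set.Ioo 0 α := fun x hx ↦
    ⟨hWD.spectrum_pos hx, (hWD.1.posSemidef_smul_one_sub_iff.1 hWr x hx).trans_lt hr⟩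
  have hg : ∀ x ∈ Set.Ioo 0 α, 0 < x / f x := fun x hx ↦ div_pos hx.1 (hf x hx)
  have hinv := (posDef_cfc hWD.1 fun x hx ↦ hg x (hWs hx)).posSemidef_inv_sub_inv
    (posDef_cfc hX.1 fun x hx ↦ hg x (hXs hx)) (hmono W X hWD.1 hX.1 hWs hXs hXW)
  rw [← cfc_inv_eq_inv_cfc hWD.1 fun x hx ↦ (hg x (hWs hx)).ne',
    ← cfc_inv_eq_inv_cfc hX.1 fun x hx ↦ (hg x (hXs hx)).ne'] at hinv
  set k : ℝ → ℝ := fun x ↦ (x / f x)⁻¹ with hk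
  have hkf : ∀ x, 0 < x → k x * x = f x := fun x hx ↦ by
    rw [hk]; simp only [inv_div]; field_simp
  have hYD : (a * X * a).PosDef := by
    have h := hX.conjTranspose_mul_mul_same (B := a) (Matrix.mulVec_injective_of_isUnit hau)
    rwa [haH] at h
  have hYf : cfc k (a * X * a) * (a * X * a) = cfc f (a * X * a) := by
    have h := cfc_mul k (fun x ↦ x) (a * X * a) (continuousOn_spectrum_real _ _)
      (continuousOn_spectrum_real _ _)
    rw [cfc_id' ℝ (a * X * a) hYD.1.isSelfAdjoint] at h
    rw [← h]
    exact cfc_congr fun x hx ↦ hkf x (hYD.spectrum_pos hx)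
  have hXf : s * cfc k X * s = cfc f X := by
    rw [hs, ← cfc_mul _ _ X (continuousOn_spectrum_real _ _) (continuousOn_spectrum_real _ _),
      ← cfc_mul _ _ X (continuousOn_spectrum_real _ _) (continuousOn_spectrum_real _ _)]
    refine cfc_congr fun x hx ↦ ?_
    have hx0 := hX.spectrum_pos hx
    rw [mul_comm, ← mul_assoc, Real.mul_self_sqrt hx0.le, mul_comm, hkf x hx0]
  have hint : cfc k (a * X * a) * (a * s) = a * s * cfc k W :=
    hYD.1.cfc_mul_eq_mul_cfc hWD.1 (by simp only [hW, ← hss, Matrix.mul_assoc]) k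
  have h := hinv.conjTranspose_mul_mul_same (s * a)
  rw [conjTranspose_mul, hsH, haH, Matrix.mul_sub, Matrix.sub_mul, ← hint] at h
  convert h using 2
  · rw [← hYf, ← hss]; simp only [Matrix.mul_assoc]
  · rw [← hXf]; simp only [Matrix.mul_assoc]

lemma NMonotoneOn.pos_of_continuousOn {n : ℕ} (hn : 1 ≤ n) {α : ℝ} {f : ℝ → ℝ}
    (hmono : NMonotoneOn n (fun t => t / f t) (Set.Ioo 0 α))
    (hfc : ContinuousOn f (Set.Ico 0 α)) (hfne : ∀ t ∈ Set.Ico (0 : ℝ) α, f t ≠ 0) :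
    ∀ t ∈ Set.Ico (0 : ℝ) α, 0 < f t := by
  have hg : ∀ s t, 0 < s → s ≤ t → t < α → s / f s ≤ t / f t := by
    intro s t hs hst ht
    have hsp : ∀ u, 0 < u → u < α →
        spectrum ℝ (algebraMap ℝ (Matrix (Fin n) (Fin n) ℂ) u) ⊆ Set.Ioo 0 α :=
      fun u h0 h1 ↦ (CFC.spectrum_algebraMap_subset u).trans
        (Set.singleton_subset_iff.2 ⟨h0, h1⟩)
    have hH : ∀ u : ℝ, (algebraMap ℝ (Matrix (Fin n) (Fin n) ℂ) u).IsHermitian :=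
      fun u ↦ cfc_predicate_algebraMap u
    have hd : ∀ u v : ℝ, algebraMap ℝ (Matrix (Fin n) (Fin n) ℂ) v - algebraMap ℝ _ u =
        diagonal fun _ ↦ ((v - u : ℝ) : ℂ) := fun u v ↦ by
      rw [← map_sub, algebraMap_eq_diagonal]; rfl
    have h := hmono _ _ (hH s) (hH t) (hsp s hs (hst.trans_lt ht)) (hsp t (hs.trans_le hst) ht)
      (by rw [hd]; exact PosSemidef.diagonal fun _ ↦ by simpa using hst)
    rw [cfc_algebraMap, cfc_algebraMap, hd, posSemidef_diagonal_iff] at h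
    exact sub_nonneg.1 (Complex.zero_le_real.1 (h ⟨0, hn⟩))
  intro t ht
  by_contra hneg
  have hneg' : ∀ u ∈ Set.Ico (0 : ℝ) α, f u < 0 := by
    intro u hu
    by_contra hu'
    obtain ⟨x, hx, hx0⟩ := isPreconnected_Ico.intermediate_value ht hu hfc
      ⟨not_lt.1 hneg, not_lt.1 hu'⟩
    exact hfne x hx hx0
  have hα : 0 < α := ht.1.trans_lt ht.2
  have hlim : Filter.Tendsto (fun s ↦ s / f s) (nhdsWithin 0 (Set.Ioo 0 α)) (nhds (0 / f 0)) :=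
    ((continuousWithinAt_id.div (hfc 0 ⟨le_rfl, hα⟩) (hfne 0 ⟨le_rfl, hα⟩)).mono
      Set.Ioo_subset_Ico_self).tendsto
  have hm : α / 2 ∈ Set.Ioo 0 α := ⟨by linarith, by linarith⟩
  have : (nhdsWithin (0 : ℝ) (Set.Ioo 0 α)).NeBot := by
    rw [nhdsWithin_Ioo_eq_nhdsGT hα]; infer_instance
  have hle : 0 / f 0 ≤ α / 2 / f (α / 2) := by
    refine le_of_tendsto hlim ?_
    filter_upwards [self_mem_nhdsWithin, nhdsWithin_le_nhds (Iio_mem_nhds hm.1)] with s hs hs'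
    exact hg s _ hs.1 (le_of_lt hs') hm.2
  rw [zero_div] at hle
  exact absurd (div_neg_of_pos_of_neg hm.1 (hneg' _ ⟨hm.1.le, hm.2⟩)) hle.not_gt

lemma Matrix.isClosed_setOf_posSemidef {ι : Type*} [Fintype ι] :
    IsClosed {M : Matrix ι ι ℂ | M.PosSemidef} := by
  simp only [posSemidef_iff_dotProduct_mulVec, IsHermitian, Set.ofPred_and, Set.ofPred_forall]
  refine .inter (isClosed_eq (by fun_prop) continuous_id) (isClosed_iInter fun x ↦ ?_)
  exact isClosed_le continuous_const (by fun_prop)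

open scoped Matrix.Norms.L2Operator in
/-- Continuity of the functional calculus on Hermitian matrices. -/
lemma Filter.Tendsto.matrix_cfc {ι T : Type*} [Fintype ι] [DecidableEq ι] {l : Filter T}
    {A : T → Matrix ι ι ℂ} {A₀ : Matrix ι ι ℂ} (hA : Tendsto A l (nhds A₀)) {s : Set ℝ}
    (hs : IsCompact s) {f : ℝ → ℝ} (hf : ContinuousOn f s)
    (hAs : ∀ᶠ t in l, spectrum ℝ (A t) ⊆ s) (hAH : ∀ᶠ t in l, (A t).IsHermitian)
    (hs₀ : spectrum ℝ A₀ ⊆ s) (hH₀ : A₀.IsHermitian) :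
    Tendsto (fun t ↦ cfc f (A t)) l (nhds (cfc f A₀)) :=
  Filter.Tendsto.cfc hs f hA hAs hAH hs₀ hH₀ hf

/-- Jensen's operator inequality for compressions by isometries. -/
lemma NMonotoneOn.posSemidef_cfc_compression_sub {m n : ℕ} {α : ℝ} {f : ℝ → ℝ}
    (hmono : NMonotoneOn n (fun t => t / f t) (Set.Ioo 0 α)) (hf : ∀ t ∈ Set.Ioo 0 α, 0 < f t)
    (hfc : ContinuousOn f (Set.Ico 0 α)) {X : Matrix (Fin n) (Fin n) ℂ} (hX : X.PosSemidef)
    {r : ℝ} (hr0 : 0 ≤ r) (hr : r < α) (hXr : (r • (1 : Matrix (Fin n) (Fin n) ℂ) - X).PosSemidef)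
    {R : Matrix (Fin n) (Fin m) ℂ} (hR : Rᴴ * R = 1) :
    (cfc f (Rᴴ * X * R) - Rᴴ * cfc f X * R).PosSemidef := by
  set P := R * Rᴴ with hP
  have hPH : Pᴴ = P := by rw [hP, conjTranspose_mul, conjTranspose_conjTranspose]
  have hPP : P * P = P := by
    rw [hP, Matrix.mul_assoc, ← Matrix.mul_assoc Rᴴ, hR, Matrix.one_mul]
  have hPR : P * R = R := by rw [hP, Matrix.mul_assoc, hR, Matrix.mul_one]
  have hRP : Rᴴ * P = Rᴴ := by rw [hP, ← Matrix.mul_assoc, hR, Matrix.one_mul]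
  set a : ℝ → Matrix (Fin n) (Fin n) ℂ := fun δ ↦ P + δ • (1 - P) with ha
  set Z : ℝ → Matrix (Fin n) (Fin n) ℂ := fun δ ↦ X + δ • 1 with hZ
  have haH : ∀ δ, (a δ)ᴴ = a δ := fun δ ↦ by simp [ha, hPH]
  have hamul : ∀ δ ε, a δ * a ε = a (δ * ε) := fun δ ε ↦ by
    simp only [ha, Matrix.add_mul, Matrix.mul_add, Matrix.mul_sub, Matrix.sub_mul,
      smul_mul_assoc, mul_smul_comm, hPP, Matrix.mul_one, Matrix.one_mul]
    module
  have ha_one : a 1 = 1 := by simp [ha]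
  have hQ : (1 - P).PosSemidef := by
    have h := posSemidef_conjTranspose_mul_self (1 - P)
    rwa [conjTranspose_sub, conjTranspose_one, hPH, Matrix.mul_sub, Matrix.mul_one,
      Matrix.sub_mul, Matrix.one_mul, hPP, sub_self, sub_zero] at h
  have ha1 : ∀ δ ∈ Set.Icc (0 : ℝ) 1, (1 - a δ * a δ).PosSemidef := fun δ hδ ↦ by
    have h : 1 - a δ * a δ = (1 - δ * δ) • (1 - P) := by
      rw [hamul, ha]; module
    rw [h]
    exact hQ.smul (sub_nonneg.2 (mul_le_one₀ hδ.2 hδ.1 hδ.2))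
  set r' := (r + α) / 2 with hr'
  have hr'0 : 0 ≤ r' := by linarith
  have hr'α : r' < α := by linarith
  set d := min 1 ((α - r) / 2) with hd
  have hd0 : 0 < d := lt_min one_pos (by linarith)
  have hd1 : ∀ δ ∈ Set.Icc 0 d, δ ∈ Set.Icc (0 : ℝ) 1 := fun δ hδ ↦
    ⟨hδ.1, hδ.2.trans (min_le_left _ _)⟩
  have hZ0 : ∀ δ ∈ Set.Icc 0 d, (Z δ).PosSemidef := fun δ hδ ↦
    hX.add (PosSemidef.one.smul hδ.1)
  have hZr : ∀ δ ∈ Set.Icc 0 d, (r' • (1 : Matrix (Fin n) (Fin n) ℂ) - Z δ).PosSemidef := by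
    intro δ hδ
    have h : r' • (1 : Matrix (Fin n) (Fin n) ℂ) - Z δ =
        (r • (1 : Matrix (Fin n) (Fin n) ℂ) - X) +
          (r' - r - δ) • (1 : Matrix (Fin n) (Fin n) ℂ) := by
      rw [hZ]; module
    rw [h]
    refine hXr.add (PosSemidef.one.smul ?_)
    linarith [hδ.2.trans (min_le_right _ _)]
  have hY0 : ∀ δ ∈ Set.Icc 0 d, (a δ * Z δ * a δ).PosSemidef := fun δ hδ ↦ by
    have h := (hZ0 δ hδ).conjTranspose_mul_mul_same (a δ)
    rwa [haH] at h
  have hYr : ∀ δ ∈ Set.Icc 0 d,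
      (r' • (1 : Matrix (Fin n) (Fin n) ℂ) - a δ * Z δ * a δ).PosSemidef := fun δ hδ ↦ by
    have h := ((hZr δ hδ).conjTranspose_mul_mul_same (a δ)).add ((ha1 δ (hd1 δ hδ)).smul hr'0)
    rw [haH] at h
    convert h using 1
    simp only [Matrix.mul_sub, Matrix.sub_mul, smul_mul_assoc, mul_smul_comm, Matrix.mul_one]
    module
  have hmain : ∀ δ ∈ Set.Ioc 0 d,
      (Rᴴ * (cfc f (a δ * Z δ * a δ) - a δ * cfc f (Z δ) * a δ) * R).PosSemidef := by
    intro δ hδ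
    have hδ' := Set.Ioc_subset_Icc_self hδ
    refine PosSemidef.conjTranspose_mul_mul_same ?_ R
    refine hmono.posSemidef_cfc_conj_sub hf (PosDef.posSemidef_add hX (PosDef.one.smul hδ.1))
      hr'α (hZr δ hδ') (haH δ) ?_ (ha1 δ (hd1 δ hδ'))
    refine IsUnit.of_mul_eq_one (a δ⁻¹) ?_
    rw [hamul, mul_inv_cancel₀ hδ.1.ne', ha_one]
  have hl : ∀ᶠ δ in nhdsWithin (0 : ℝ) (Set.Ioi 0), δ ∈ Set.Ioc 0 d :=
    Ioc_mem_nhdsGT hd0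
  have h0 : (0 : ℝ) ∈ Set.Icc 0 d := ⟨le_rfl, hd0.le⟩
  have hfK : ContinuousOn f (Set.Icc 0 r') := hfc.mono fun x hx ↦ ⟨hx.1, hx.2.trans_lt hr'α⟩
  have hac : Continuous a := by fun_prop
  have hZc : Continuous Z := by fun_prop
  have hYc : Continuous fun δ ↦ a δ * Z δ * a δ := by fun_prop
  have hYlim : Filter.Tendsto (fun δ ↦ cfc f (a δ * Z δ * a δ)) (nhdsWithin 0 (Set.Ioi 0))
      (nhds (cfc f (a 0 * Z 0 * a 0))) := by
    refine ((hYc.tendsto 0).mono_left nhdsWithin_le_nhds).matrix_cfc isCompact_Icc hfK ?_ ?_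
      ((hY0 0 h0).spectrum_subset_Icc (hYr 0 h0)) (hY0 0 h0).1
    · filter_upwards [hl] with δ hδ
      have hδ' := Set.Ioc_subset_Icc_self hδ
      exact (hY0 δ hδ').spectrum_subset_Icc (hYr δ hδ')
    · filter_upwards [hl] with δ hδ using (hY0 δ (Set.Ioc_subset_Icc_self hδ)).1
  have hZlim : Filter.Tendsto (fun δ ↦ cfc f (Z δ)) (nhdsWithin 0 (Set.Ioi 0))
      (nhds (cfc f (Z 0))) := by
    refine ((hZc.tendsto 0).mono_left nhdsWithin_le_nhds).matrix_cfc isCompact_Icc hfK ?_ ?_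
      ((hZ0 0 h0).spectrum_subset_Icc (hZr 0 h0)) (hZ0 0 h0).1
    · filter_upwards [hl] with δ hδ
      have hδ' := Set.Ioc_subset_Icc_self hδ
      exact (hZ0 δ hδ').spectrum_subset_Icc (hZr δ hδ')
    · filter_upwards [hl] with δ hδ using (hZ0 δ (Set.Ioc_subset_Icc_self hδ)).1
  have halim := (hac.tendsto 0).mono_left (nhdsWithin_le_nhds (s := Set.Ioi 0))
  have hRc : Continuous fun M : Matrix (Fin n) (Fin n) ℂ ↦ Rᴴ * M * R := by fun_prop
  have hlim := isClosed_setOf_posSemidef.mem_of_tendsto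
    ((hRc.tendsto _).comp (hYlim.sub ((halim.mul hZlim).mul halim))) (hl.mono hmain)
  have ha0 : a 0 = P := by simp [ha]
  have hZ0' : Z 0 = X := by simp [hZ]
  have hint : cfc f (P * X * P) * R = R * cfc f (Rᴴ * X * R) := by
    refine IsHermitian.cfc_mul_eq_mul_cfc ?_ (hX.conjTranspose_mul_mul_same R).1 ?_ f
    · rw [← ha0, ← hZ0']
      exact (hY0 0 h0).1
    · rw [Matrix.mul_assoc, hPR, hP]; simp only [Matrix.mul_assoc]
  have hPXR : Rᴴ * (P * cfc f X * P) * R = Rᴴ * cfc f X * R := by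
    rw [Matrix.mul_assoc, Matrix.mul_assoc (P * _), hPR, ← Matrix.mul_assoc, ← Matrix.mul_assoc,
      hRP]
  simp only [Set.mem_ofPred_eq, ha0, hZ0'] at hlim
  rwa [Matrix.mul_sub, Matrix.sub_mul, hPXR, Matrix.mul_assoc, hint, ← Matrix.mul_assoc, hR,
    Matrix.one_mul] at hlim

/-- If `ℂᵐ` embeds in `ℂⁿ` through two isometries with orthogonal ranges, and `t / f t` is
`n`-monotone, then `f` satisfies the concavity inequality for `m × m` matrices. -/
lemma NMonotoneOn.posSemidef_cfc_convexCombination_sub {m n : ℕ} {α : ℝ} {f : ℝ → ℝ}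
    (hmono : NMonotoneOn n (fun t => t / f t) (Set.Ioo 0 α)) (hf : ∀ t ∈ Set.Ioo 0 α, 0 < f t)
    (hfc : ContinuousOn f (Set.Ico 0 α)) (hα : 0 < α) {J₁ J₂ : Matrix (Fin n) (Fin m) ℂ}
    (h11 : J₁ᴴ * J₁ = 1) (h22 : J₂ᴴ * J₂ = 1) (h12 : J₁ᴴ * J₂ = 0) (h21 : J₂ᴴ * J₁ = 0)
    {A B : Matrix (Fin m) (Fin m) ℂ} (hA : A.IsHermitian) (hB : B.IsHermitian)
    (hAs : spectrum ℝ A ⊆ Set.Ico 0 α) (hBs : spectrum ℝ B ⊆ Set.Ico 0 α)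
    {l : ℝ} (hl : l ∈ Set.Icc (0 : ℝ) 1) :
    (cfc f (l • A + (1 - l) • B) - (l • cfc f A + (1 - l) • cfc f B)).PosSemidef := by
  obtain ⟨r, ⟨hr0, hrα⟩, hAr, hBr⟩ : ∃ r ∈ Set.Ico 0 α,
      (∀ x ∈ spectrum ℝ A, x ≤ r) ∧ ∀ x ∈ spectrum ℝ B, x ≤ r := by
    set S := insert 0 (spectrum ℝ A ∪ spectrum ℝ B) with hS
    have hSf : S.Finite := (A.finite_real_spectrum.union B.finite_real_spectrum).insert 0
    obtain ⟨r, hrS, hr⟩ := hSf.exists_maximal (Set.insert_nonempty _ _)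
    have hr' : ∀ x ∈ S, x ≤ r := fun x hx ↦ (le_total x r).elim id fun h ↦ hr hx h
    refine ⟨r, ?_, fun x hx ↦ hr' x (by simp [hS, hx]), fun x hx ↦ hr' x (by simp [hS, hx])⟩
    rcases hrS with rfl | h | h
    exacts [⟨le_rfl, hα⟩, hAs h, hBs h]
  have hA0 : A.PosSemidef := posSemidef_of_spectrum_nonneg hA fun x hx ↦ (hAs hx).1
  have hB0 : B.PosSemidef := posSemidef_of_spectrum_nonneg hB fun x hx ↦ (hBs hx).1
  have J11 : ∀ M : Matrix (Fin m) (Fin m) ℂ, J₁ᴴ * (J₁ * M) = M := fun M ↦ by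
    rw [← Matrix.mul_assoc, h11, Matrix.one_mul]
  have J22 : ∀ M : Matrix (Fin m) (Fin m) ℂ, J₂ᴴ * (J₂ * M) = M := fun M ↦ by
    rw [← Matrix.mul_assoc, h22, Matrix.one_mul]
  have J12 : ∀ {k : ℕ} (M : Matrix (Fin m) (Fin k) ℂ), J₁ᴴ * (J₂ * M) = 0 := fun M ↦ by
    rw [← Matrix.mul_assoc, h12, Matrix.zero_mul]
  have J21 : ∀ {k : ℕ} (M : Matrix (Fin m) (Fin k) ℂ), J₂ᴴ * (J₁ * M) = 0 := fun M ↦ by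
    rw [← Matrix.mul_assoc, h21, Matrix.zero_mul]
  have J11' : ∀ M : Matrix (Fin m) (Fin n) ℂ, J₁ᴴ * (J₁ * M) = M := fun M ↦ by
    rw [← Matrix.mul_assoc, h11, Matrix.one_mul]
  have J22' : ∀ M : Matrix (Fin m) (Fin n) ℂ, J₂ᴴ * (J₂ * M) = M := fun M ↦ by
    rw [← Matrix.mul_assoc, h22, Matrix.one_mul]
  set X := J₁ * A * J₁ᴴ + J₂ * B * J₂ᴴ with hX
  have hX0 : X.PosSemidef :=
    (hA0.mul_mul_conjTranspose_same J₁).add (hB0.mul_mul_conjTranspose_same J₂)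
  have hQ : (1 - J₁ * J₁ᴴ - J₂ * J₂ᴴ).PosSemidef := by
    have h := posSemidef_conjTranspose_mul_self (1 - J₁ * J₁ᴴ - J₂ * J₂ᴴ)
    convert h using 1
    simp only [conjTranspose_sub, conjTranspose_one, conjTranspose_mul,
      conjTranspose_conjTranspose, Matrix.mul_sub, Matrix.sub_mul, Matrix.mul_one, Matrix.one_mul,
      Matrix.mul_assoc, J11', J22', J12, J21, Matrix.mul_zero]
    abel
  have hXr : (r • (1 : Matrix (Fin n) (Fin n) ℂ) - X).PosSemidef := by
    have h := (((hA.posSemidef_smul_one_sub_iff.2 hAr).mul_mul_conjTranspose_same J₁).add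
      ((hB.posSemidef_smul_one_sub_iff.2 hBr).mul_mul_conjTranspose_same J₂)).add (hQ.smul hr0)
    convert h using 1
    simp only [hX, Matrix.mul_sub, Matrix.sub_mul, Matrix.mul_one, Matrix.mul_smul, Matrix.smul_mul]
    module
  have hX1 : X * J₁ = J₁ * A := by
    simp only [hX, Matrix.add_mul, Matrix.mul_assoc, h11, h21, Matrix.mul_one, Matrix.mul_zero,
      add_zero]
  have hX2 : X * J₂ = J₂ * B := by
    simp only [hX, Matrix.add_mul, Matrix.mul_assoc, h22, h12, Matrix.mul_one, Matrix.mul_zero,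
      zero_add]
  have hf1 := hX0.1.cfc_mul_eq_mul_cfc hA hX1 f
  have hf2 := hX0.1.cfc_mul_eq_mul_cfc hB hX2 f
  have hl1 : √l * √l = l := Real.mul_self_sqrt hl.1
  have hl2 : √(1 - l) * √(1 - l) = 1 - l := Real.mul_self_sqrt (sub_nonneg.2 hl.2)
  set R := √l • J₁ + √(1 - l) • J₂ with hR
  have hcomp : ∀ (M : Matrix (Fin n) (Fin n) ℂ) (C D : Matrix (Fin m) (Fin m) ℂ),
      M * J₁ = J₁ * C → M * J₂ = J₂ * D → Rᴴ * M * R = l • C + (1 - l) • D := by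
    intro M C D hC hD
    simp only [hR, conjTranspose_add, conjTranspose_smul, star_trivial, Matrix.mul_assoc,
      Matrix.mul_add, Matrix.add_mul, Matrix.mul_smul, Matrix.smul_mul, hC, hD, J11, J22, J12, J21,
      smul_zero, zero_add, add_zero, smul_smul, hl1, hl2]
  have hRR : Rᴴ * R = 1 := by
    have h := hcomp 1 1 1 (by simp) (by simp)
    rw [Matrix.mul_one] at h
    rw [h]
    module
  have h := hmono.posSemidef_cfc_compression_sub hf hfc hX0 hr0 hrα hXr hRR
  rwa [hcomp X A B hX1 hX2, hcomp _ _ _ hf1 hf2] at h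

/-- If `f : [0, α) → ℝ` is continuous and nonvanishing and `g(t) = t / f(t)` is
`n`-monotone on `(0, α)`, then `f(0) ≥ 0` and `f` is `⌊n/2⌋`-concave on `[0, α)`. -/
theorem quotient_monotone_implies_concave
    (n : ℕ) (hn : 1 ≤ n) (α : ℝ) (hα : 0 < α) (f : ℝ → ℝ)
    (hfc : ContinuousOn f (Set.Ico 0 α))
    (hfne : ∀ t ∈ Set.Ico (0 : ℝ) α, f t ≠ 0)
    (hmono : NMonotoneOn n (fun t => t / f t) (Set.Ioo 0 α)) :
    0 ≤ f 0 ∧ NConcaveOn (n / 2) f (Set.Ico 0 α) := by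

  have hfpos := hmono.pos_of_continuousOn hn hfc hfne
  refine ⟨(hfpos 0 ⟨le_rfl, hα⟩).le, ?_⟩
  have hmn : n / 2 + n / 2 ≤ n := by omega
  generalize n / 2 = m at hmn ⊢
  intro A B hA hB hAs hBs l hl
  set i₁ : Fin m → Fin n := fun i ↦ ⟨i, by omega⟩ with hi₁
  set i₂ : Fin m → Fin n := fun i ↦ ⟨m + i, by omega⟩ with hi₂
  set J₁ : Matrix (Fin n) (Fin m) ℂ := (1 : Matrix (Fin n) (Fin n) ℂ).submatrix id i₁ with hJ₁
  set J₂ : Matrix (Fin n) (Fin m) ℂ := (1 : Matrix (Fin n) (Fin n) ℂ).submatrix id i₂ with hJ₂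
  have hJ : ∀ i j : Fin m → Fin n,
      ((1 : Matrix (Fin n) (Fin n) ℂ).submatrix id i)ᴴ *
        (1 : Matrix (Fin n) (Fin n) ℂ).submatrix id j = (1 : Matrix (Fin n) (Fin n) ℂ).submatrix i j := fun i j ↦ by
    rw [conjTranspose_submatrix, conjTranspose_one, ← submatrix_mul _ _ _ _ _ Function.bijective_id,
      Matrix.one_mul]
  have h11 : J₁ᴴ * J₁ = 1 := by
    rw [hJ₁, hJ]
    exact submatrix_one _ fun i j h ↦ by simpa [hi₁, Fin.ext_iff] using h
  have h22 : J₂ᴴ * J₂ = 1 := by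
    rw [hJ₂, hJ]
    exact submatrix_one _ fun i j h ↦ by simpa [hi₂, Fin.ext_iff] using h
  have h12 : J₁ᴴ * J₂ = 0 := by
    rw [hJ₁, hJ₂, hJ]
    ext i j
    exact one_apply_ne (by simp only [hi₁, hi₂, ne_eq, Fin.ext_iff]; omega)
  have h21 : J₂ᴴ * J₁ = 0 := by
    rw [← conjTranspose_conjTranspose J₁, ← conjTranspose_mul, h12, conjTranspose_zero]
  clear_value J₁ J₂
  exact hmono.posSemidef_cfc_convexCombination_sub (fun t ht ↦ hfpos t ⟨ht.1.le, ht.2⟩) hfc hα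
    h11 h22 h12 h21 hA hB hAs hBs hl
end

section
/- Let n ≥ 1 and let f : [0, ∞) → ℝ be a continuous (n+1)-concave function with f(0) ≥ 0 and f(t) > 0 for all t > 0. Define g by g(t) = t / f(t) for t > 0 and g(0) = 0. Then for every pair of Hermitian positive semidefinite matrices A, B ∈ M_n(ℂ): Tr(A) + Tr(B) − Tr(|A − B|) ≤ 2 Tr(f(A)^{1/2} g(B) f(A)^{1/2}). -/
open Matrix
open scoped ComplexOrder

section Helpers

open scoped MatrixOrder

section Calculus

variable {m k : Type*} [Fintype m] [DecidableEq m] [Fintype k] [DecidableEq k]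

theorem Matrix.continuousOn_spectrum (X : Matrix m m ℂ) (h : ℝ → ℝ) :
    ContinuousOn h (spectrum ℝ X) :=
  (Matrix.finite_real_spectrum (A := X)).continuousOn h

theorem Matrix.cfc_mul' (X : Matrix m m ℂ) (h₁ h₂ : ℝ → ℝ) :
    cfc (fun t => h₁ t * h₂ t) X = cfc h₁ X * cfc h₂ X :=
  cfc_mul h₁ h₂ X (X.continuousOn_spectrum h₁) (X.continuousOn_spectrum h₂)

theorem Matrix.PosSemidef.nonneg_of_mem_spectrum {X : Matrix m m ℂ} (hX : X.PosSemidef)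
    {t : ℝ} (ht : t ∈ spectrum ℝ X) : 0 ≤ t :=
  spectrum_nonneg_of_nonneg hX.nonneg ht

theorem Matrix.PosDef.pos_of_mem_spectrum {X : Matrix m m ℂ} (hX : X.PosDef)
    {t : ℝ} (ht : t ∈ spectrum ℝ X) : 0 < t := by
  refine (hX.posSemidef.nonneg_of_mem_spectrum ht).lt_of_ne ?_
  rintro rfl
  exact spectrum.zero_notMem ℝ hX.isUnit ht

theorem Matrix.cfc_posSemidef {X : Matrix m m ℂ} {h : ℝ → ℝ}
    (hh : ∀ t ∈ spectrum ℝ X, 0 ≤ h t) : (cfc h X).PosSemidef :=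
  Matrix.nonneg_iff_posSemidef.mp (cfc_nonneg hh)

/-- The functional calculus respects intertwining relations between Hermitian matrices. -/
theorem Matrix.IsHermitian.cfc_mul_eq_mul_cfc_s5 {X : Matrix m m ℂ} {Y : Matrix k k ℂ}
    (hX : X.IsHermitian) (hY : Y.IsHermitian) {W : Matrix m k ℂ} (hW : X * W = W * Y)
    (h : ℝ → ℝ) : cfc h X * W = W * cfc h Y := by
  classical
  set s : Finset ℝ := ((Matrix.finite_real_spectrum (A := X)).union
    (Matrix.finite_real_spectrum (A := Y))).toFinset with hs
  set p : Polynomial ℝ := Lagrange.interpolate s id h with hp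
  have hev : ∀ t ∈ s, p.eval t = h t := fun t ht => by
    exact Lagrange.eval_interpolate_at_node (v := id) h Function.injective_id.injOn ht
  have h1 : cfc h X = Polynomial.aeval X p := by
    rw [← cfc_polynomial p X hX.isSelfAdjoint]
    exact cfc_congr fun t ht => (hev t (by simp [hs, ht])).symm
  have h2 : cfc h Y = Polynomial.aeval Y p := by
    rw [← cfc_polynomial p Y hY.isSelfAdjoint]
    exact cfc_congr fun t ht => (hev t (by simp [hs, ht])).symm
  rw [h1, h2]
  clear_value p
  clear hev h1 h2 hp
  have hpow : ∀ j : ℕ, X ^ j * W = W * Y ^ j := by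
    intro j
    induction j with
    | zero => simp
    | succ j ih => rw [pow_succ, pow_succ, Matrix.mul_assoc, hW, ← Matrix.mul_assoc, ih,
        Matrix.mul_assoc]
  induction p using Polynomial.induction_on' with
  | add p q hp hq => simp only [map_add, Matrix.add_mul, Matrix.mul_add, hp, hq]
  | monomial j a =>
    simp only [Polynomial.aeval_monomial, Algebra.algebraMap_eq_smul_one, Matrix.smul_mul,
      one_mul, Matrix.mul_smul, hpow]

end Calculus

/-- Jensen's inequality for compressions by an isometry. -/
theorem NConcaveOn.compression {N : ℕ} {k : Type*} [Fintype k] [DecidableEq k] {h : ℝ → ℝ}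
    (hh : NConcaveOn N h (Set.Ici 0)) {X : Matrix (Fin N) (Fin N) ℂ} (hX : X.PosSemidef)
    {S : Matrix (Fin N) k ℂ} (hS : Sᴴ * S = 1) :
    Sᴴ * cfc h X * S ≤ cfc h (Sᴴ * X * S) := by
  set R : Matrix (Fin N) (Fin N) ℂ := (2 : ℝ) • (S * Sᴴ) - 1 with hR
  have hRh : Rᴴ = R := by simp [hR]
  have hRS : R * S = S := by
    rw [hR, Matrix.sub_mul, Matrix.smul_mul, Matrix.mul_assoc, hS, Matrix.mul_one, Matrix.one_mul]
    module
  have hSR : Sᴴ * R = Sᴴ := by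
    have := congrArg Matrix.conjTranspose hRS
    rwa [Matrix.conjTranspose_mul, hRh] at this
  have hRR : R * R = 1 := by
    nth_rw 2 [hR]
    rw [Matrix.mul_sub, Matrix.mul_smul, ← Matrix.mul_assoc, hRS, Matrix.mul_one, hR]
    module
  have hZ : (R * X * R).PosSemidef := by
    have := hX.conjTranspose_mul_mul_same R
    rwa [hRh] at this
  have hXR : X * R = R * (R * X * R) := by
    rw [← Matrix.mul_assoc, ← Matrix.mul_assoc, hRR, Matrix.one_mul]
  have hc := hh X (R * X * R) hX.1 hZ.1 (fun t ht => hX.nonneg_of_mem_spectrum ht)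
    (fun t ht => hZ.nonneg_of_mem_spectrum ht) (1 / 2) ⟨by norm_num, by norm_num⟩
  set Y := (1 / 2 : ℝ) • X + (1 - 1 / 2 : ℝ) • (R * X * R) with hY
  have hYp : Y.PosSemidef :=
    (hX.smul (by norm_num : (0 : ℝ) ≤ 1 / 2)).add (hZ.smul (by norm_num : (0 : ℝ) ≤ 1 - 1 / 2))
  have hYS : Y * S = S * (Sᴴ * X * S) := by
    rw [hY, Matrix.add_mul, Matrix.smul_mul, Matrix.smul_mul, Matrix.mul_assoc _ R S, hRS, hR,
      Matrix.sub_mul, Matrix.sub_mul, Matrix.smul_mul, Matrix.smul_mul, Matrix.one_mul]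
    simp only [Matrix.mul_assoc]
    module
  have e1 := hYp.1.cfc_mul_eq_mul_cfc_s5 (hX.conjTranspose_mul_mul_same S).1 hYS h
  have e2 := hX.1.cfc_mul_eq_mul_cfc_s5 hZ.1 hXR h
  have e3 : Sᴴ * cfc h (R * X * R) * S = Sᴴ * cfc h X * S := by
    nth_rw 1 [← hSR]
    rw [Matrix.mul_assoc Sᴴ R, ← e2, Matrix.mul_assoc, Matrix.mul_assoc, hRS, Matrix.mul_assoc]
  have key := hc.conjTranspose_mul_mul_same S
  rw [Matrix.mul_sub, Matrix.sub_mul, Matrix.mul_assoc Sᴴ (cfc h Y), e1, ← Matrix.mul_assoc, hS,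
    Matrix.one_mul, Matrix.mul_add, Matrix.add_mul, Matrix.mul_smul, Matrix.mul_smul,
    Matrix.smul_mul, Matrix.smul_mul, e3, ← add_smul, add_sub_cancel, one_smul] at key
  exact key

variable {n : ℕ}

/-- The isometric inclusion of `ℂⁿ` in `ℂⁿ⁺¹` as the first `n` coordinates. -/
def Matrix.castSuccIsometry (n : ℕ) : Matrix (Fin (n + 1)) (Fin n) ℂ :=
  (1 : Matrix (Fin (n + 1)) (Fin (n + 1)) ℂ).submatrix id Fin.castSucc

theorem Matrix.castSuccIsometry_conjTranspose_mul_self (n : ℕ) :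
    (castSuccIsometry n)ᴴ * castSuccIsometry n = 1 := by
  ext i j
  simp [castSuccIsometry, Matrix.mul_apply, Matrix.one_apply]

/-- The functional calculus of the zero-padding of `A`, compressed back to `ℂⁿ`, is that of `A`. -/
theorem Matrix.PosSemidef.castSucc_cfc {A : Matrix (Fin n) (Fin n) ℂ} (hA : A.PosSemidef)
    (h : ℝ → ℝ) :
    (castSuccIsometry n)ᴴ * cfc h (castSuccIsometry n * A * (castSuccIsometry n)ᴴ) *
      castSuccIsometry n = cfc h A := by
  have hW := castSuccIsometry_conjTranspose_mul_self n
  rw [Matrix.mul_assoc, (hA.mul_mul_conjTranspose_same (castSuccIsometry n)).1.cfc_mul_eq_mul_cfc_s5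
    hA.1 (by rw [Matrix.mul_assoc, hW, Matrix.mul_one]), ← Matrix.mul_assoc, hW, Matrix.one_mul]

theorem Matrix.PosSemidef.of_add_smul {k : Type*} [Fintype k] {M K : Matrix k k ℂ}
    (hM : M.IsHermitian) (h : ∀ l : ℝ, 0 < l → l < 1 → (M + l • K).PosSemidef) :
    M.PosSemidef := by
  refine .of_dotProduct_mulVec_nonneg hM fun x => ?_
  have hlim : Filter.Tendsto (fun l : ℝ => star x ⬝ᵥ (M + l • K) *ᵥ x) (nhdsWithin 0 (Set.Ioi 0))
      (nhds (star x ⬝ᵥ M *ᵥ x)) := by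
    refine Filter.Tendsto.mono_left ?_ nhdsWithin_le_nhds
    have hc : Continuous (fun l : ℝ => star x ⬝ᵥ (M + l • K) *ᵥ x) := by fun_prop
    simpa using hc.tendsto 0
  refine ge_of_tendsto hlim ?_
  filter_upwards [Ioo_mem_nhdsGT (zero_lt_one (α := ℝ))] with l hl
  exact (h l hl.1 hl.2).dotProduct_mulVec_nonneg x

/-- A nonnegative `(n + 1)`-concave function on `[0, ∞)` is `n`-monotone. -/
theorem NConcaveOn.cfc_le_cfc {h : ℝ → ℝ} (hh : NConcaveOn (n + 1) h (Set.Ici 0))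
    (h0 : ∀ t, 0 ≤ t → 0 ≤ h t) {A D : Matrix (Fin n) (Fin n) ℂ} (hA : A.PosSemidef)
    (hAD : A ≤ D) : cfc h A ≤ cfc h D := by
  have hD : D.PosSemidef := (hA.nonneg.trans hAD).posSemidef
  rw [Matrix.le_iff]
  refine .of_add_smul (K := cfc h A)
    ((cfc_predicate h D : IsSelfAdjoint _).sub (cfc_predicate h A)) fun l hl hl1 => ?_
  set S := Matrix.castSuccIsometry n
  set C : Matrix (Fin n) (Fin n) ℂ := A + l⁻¹ • (D - A) with hC
  have hCp : C.PosSemidef := hA.add ((Matrix.le_iff.mp hAD).smul (inv_nonneg.mpr hl.le))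
  have hA' := hA.mul_mul_conjTranspose_same S
  have hC' := hCp.mul_mul_conjTranspose_same S
  have key := hh _ _ hC'.1 hA'.1 (fun t ht => hC'.nonneg_of_mem_spectrum ht)
    (fun t ht => hA'.nonneg_of_mem_spectrum ht) l ⟨hl.le, hl1.le⟩
  have hcomb : l • (S * C * Sᴴ) + (1 - l) • (S * A * Sᴴ) = S * D * Sᴴ := by
    have hD' : l • C + (1 - l) • A = D := by
      rw [hC, smul_add, smul_smul, mul_inv_cancel₀ hl.ne']
      module
    clear_value C
    rw [← hD', Matrix.mul_add, Matrix.add_mul, Matrix.mul_smul, Matrix.mul_smul, Matrix.smul_mul,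
      Matrix.smul_mul]
  rw [hcomb] at key
  have key2 := key.conjTranspose_mul_mul_same S
  rw [Matrix.mul_sub, Matrix.sub_mul, Matrix.mul_add, Matrix.add_mul, Matrix.mul_smul,
    Matrix.mul_smul, Matrix.smul_mul, Matrix.smul_mul, hD.castSucc_cfc, hA.castSucc_cfc,
    hCp.castSucc_cfc] at key2
  have key3 := key2.add ((Matrix.cfc_posSemidef (X := C)
    fun t ht => h0 t (hCp.nonneg_of_mem_spectrum ht)).smul hl.le)
  convert key3 using 1
  module

/-- `(n + 1)`-concavity implies ordinary concavity. -/
theorem NConcaveOn.concaveOn {N : ℕ} [NeZero N] {h : ℝ → ℝ} (hh : NConcaveOn N h (Set.Ici 0)) :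
    ConcaveOn ℝ (Set.Ici 0) h := by
  refine ⟨convex_Ici 0, fun x hx y hy a b ha hb hab => ?_⟩
  have hherm : ∀ r : ℝ, (algebraMap ℝ (Matrix (Fin N) (Fin N) ℂ) r).IsHermitian :=
    fun r => IsSelfAdjoint.algebraMap _ (.all r)
  have hspec : ∀ r ∈ Set.Ici (0 : ℝ),
      spectrum ℝ (algebraMap ℝ (Matrix (Fin N) (Fin N) ℂ) r) ⊆ Set.Ici 0 := by
    intro r hr
    rw [spectrum.scalar_eq]
    simpa using hr
  have key := hh _ _ (hherm x) (hherm y) (hspec x hx) (hspec y hy) a ⟨ha, by linarith⟩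
  obtain rfl : b = 1 - a := by linarith
  simp only [Algebra.smul_def, ← map_mul, ← map_add, ← map_sub, cfc_algebraMap] at key
  have := key.diag_nonneg (i := 0)
  rw [Matrix.algebraMap_matrix_apply, if_pos rfl] at this
  simp only [Complex.coe_algebraMap, Complex.zero_le_real, sub_nonneg] at this
  exact this

/-- The operator form of `h(t) / t` being decreasing, for perturbations of rank one. -/
theorem NConcaveOn.sqrt_mul_cfc_div_mul_sqrt_le {h : ℝ → ℝ}
    (hh : NConcaveOn (n + 1) h (Set.Ici 0)) (h0 : 0 ≤ h 0) {A R : Matrix (Fin n) (Fin n) ℂ}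
    (hA : A.PosSemidef) (hR : R.IsHermitian) (hRA : R * R = A) (v : Fin n → ℂ) :
    R * cfc (fun t => h t / t) (A + vecMulVec v (star v)) * R ≤ cfc h A := by
  set S := Matrix.castSuccIsometry n
  set T : Matrix (Fin n) (Fin (n + 1)) ℂ := Matrix.of fun i => Fin.snoc (R i) (v i) with hT
  have hTS : T * S = R := by
    ext i j
    simp [hT, S, Matrix.castSuccIsometry, Matrix.mul_apply, Matrix.one_apply]
  have hTT : T * Tᴴ = A + vecMulVec v (star v) := by
    ext i j
    rw [← hRA]
    nth_rw 2 [← hR]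
    simp [hT, Matrix.mul_apply, Fin.sum_univ_castSucc, vecMulVec_apply]
  have hB : (A + vecMulVec v (star v)).PosSemidef := hA.add (posSemidef_vecMulVec_self_star v)
  have hX : (Tᴴ * T).PosSemidef := posSemidef_conjTranspose_mul_self T
  have hST : Sᴴ * Tᴴ = R := by rw [← conjTranspose_mul, hTS, hR]
  have hint := hB.1.cfc_mul_eq_mul_cfc_s5 hX.1 (W := T) (by rw [← hTT, Matrix.mul_assoc])
    (fun t => h t / t)
  have h1 : Tᴴ * cfc (fun t => h t / t) (A + vecMulVec v (star v)) * T ≤ cfc h (Tᴴ * T) := by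
    rw [Matrix.mul_assoc, hint, ← Matrix.mul_assoc]
    nth_rw 1 [← cfc_id' ℝ (Tᴴ * T) hX.1.isSelfAdjoint]
    rw [← Matrix.cfc_mul']
    refine cfc_mono (fun t ht => ?_) (continuousOn_spectrum _ _) (continuousOn_spectrum _ _)
    rcases (hX.nonneg_of_mem_spectrum ht).eq_or_lt with rfl | ht
    · simpa using h0
    · rw [mul_div_cancel₀ _ ht.ne']
  have h2 := (Matrix.le_iff.mp h1).conjTranspose_mul_mul_same S
  rw [Matrix.mul_sub, Matrix.sub_mul, ← Matrix.le_iff] at h2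
  have h3 := hh.compression hX (castSuccIsometry_conjTranspose_mul_self n)
  refine le_trans (le_of_eq ?_) (h2.trans (h3.trans (le_of_eq ?_)))
  · simp only [← Matrix.mul_assoc]
    rw [hST]
    simp only [Matrix.mul_assoc]
    rw [hTS]
  · rw [← Matrix.mul_assoc, hST, Matrix.mul_assoc, hTS, hRA]

theorem Matrix.le_of_mul_eq_one_of_le {k : Type*} [Fintype k] [DecidableEq k]
    {M N M' N' : Matrix k k ℂ} (hM' : M'.IsHermitian) (hN' : N'.PosSemidef)
    (hM : M' * M = 1) (hN : N' * N = 1) (h : N ≤ M) : M' ≤ N' := by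
  have hM2 := mul_eq_one_comm.mp hM
  have hN2 := mul_eq_one_comm.mp hN
  have hD := Matrix.le_iff.mp h
  have h1 := hD.conjTranspose_mul_mul_same M'
  have h2 := (hN'.conjTranspose_mul_mul_same (M - N)).conjTranspose_mul_mul_same M'
  rw [hD.1.eq] at h2
  rw [hM'.eq] at h1 h2
  rw [Matrix.le_iff]
  convert h1.add h2 using 1
  have e1 : M' * (M - N) = 1 - M' * N := by rw [mul_sub, hM]
  have e2 : (M - N) * M' = 1 - N * M' := by rw [sub_mul, hM2]
  calc N' - M' = (1 - M' * N) * N' * (1 - N * M') + (1 - M' * N) * M' := by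
        have a1 : M' * N * N' = M' := by rw [mul_assoc, hN2, mul_one]
        have a2 : N' * (N * M') = M' := by rw [← mul_assoc, hN, one_mul]
        simp only [sub_mul, mul_sub, one_mul, mul_one, a1, a2]
        rw [← mul_assoc]
        abel
    _ = _ := by
        rw [← e1, ← e2]
        simp only [mul_assoc]
        abel

theorem Matrix.PosDef.cfc_mul_cfc_div {f g : ℝ → ℝ} (hfpos : ∀ t : ℝ, 0 < t → 0 < f t)
    (hg : ∀ t : ℝ, 0 < t → g t = t / f t) {A : Matrix (Fin n) (Fin n) ℂ} (hA : A.PosDef) :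
    cfc g A * cfc (fun t => f t / t) A = 1 := by
  rw [← cfc_mul', ← cfc_const_one ℝ A hA.1.isSelfAdjoint]
  refine cfc_congr fun t ht => ?_
  have := hA.pos_of_mem_spectrum ht
  have h2 := hfpos t this
  simp only [hg t this]
  field_simp

theorem NConcaveOn.cfc_le_cfc_add_vecMulVec {f g : ℝ → ℝ}
    (hf : NConcaveOn (n + 1) f (Set.Ici 0)) (hf0 : 0 ≤ f 0)
    (hfpos : ∀ t : ℝ, 0 < t → 0 < f t) (hg : ∀ t : ℝ, 0 < t → g t = t / f t)
    {A : Matrix (Fin n) (Fin n) ℂ} (hA : A.PosDef) (v : Fin n → ℂ) :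
    cfc g A ≤ cfc g (A + vecMulVec v (star v)) := by
  have hB : (A + vecMulVec v (star v)).PosDef :=
    hA.add_posSemidef (posSemidef_vecMulVec_self_star v)
  refine Matrix.le_of_mul_eq_one_of_le (cfc_predicate g A : IsSelfAdjoint _)
    (Matrix.cfc_posSemidef fun t ht => ?_) (hA.cfc_mul_cfc_div hfpos hg)
    (hB.cfc_mul_cfc_div hfpos hg) ?_
  · have := hB.pos_of_mem_spectrum ht
    rw [hg t this]
    exact (div_pos this (hfpos t this)).le
  set R := cfc Real.sqrt A with hR
  set I := cfc (fun t => (Real.sqrt t)⁻¹) A with hI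
  have hRh : R.IsHermitian := (cfc_predicate _ A : IsSelfAdjoint _)
  have hIh : I.IsHermitian := (cfc_predicate _ A : IsSelfAdjoint _)
  have hRA : R * R = A := by
    rw [hR, ← Matrix.cfc_mul']
    nth_rw 2 [← cfc_id' ℝ A hA.1.isSelfAdjoint]
    exact cfc_congr fun t ht => Real.mul_self_sqrt (hA.pos_of_mem_spectrum ht).le
  have hIR : I * R = 1 := by
    rw [hR, hI, ← Matrix.cfc_mul', ← cfc_const_one ℝ A hA.1.isSelfAdjoint]
    exact cfc_congr fun t ht =>
      inv_mul_cancel₀ (Real.sqrt_ne_zero'.mpr (hA.pos_of_mem_spectrum ht))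
  have hRI := mul_eq_one_comm.mp hIR
  have hIfI : I * cfc f A * I = cfc (fun t => f t / t) A := by
    rw [hI, ← Matrix.cfc_mul', ← Matrix.cfc_mul']
    refine cfc_congr fun t ht => ?_
    have ht' := hA.pos_of_mem_spectrum ht
    rw [mul_right_comm, ← mul_inv, Real.mul_self_sqrt ht'.le, inv_mul_eq_div]
  have key := (Matrix.le_iff.mp (hf.sqrt_mul_cfc_div_mul_sqrt_le hf0 hA.posSemidef hRh hRA
    v)).conjTranspose_mul_mul_same I
  rw [hIh.eq, Matrix.mul_sub, Matrix.sub_mul, hIfI] at key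
  rw [Matrix.le_iff]
  convert key using 2
  simp only [← mul_assoc]
  rw [hIR, one_mul, mul_assoc, hRI, mul_one]

theorem NConcaveOn.cfc_div_le_cfc_div {f g : ℝ → ℝ}
    (hf : NConcaveOn (n + 1) f (Set.Ici 0)) (hf0 : 0 ≤ f 0)
    (hfpos : ∀ t : ℝ, 0 < t → 0 < f t) (hg : ∀ t : ℝ, 0 < t → g t = t / f t)
    {A D : Matrix (Fin n) (Fin n) ℂ} (hA : A.PosDef) (hAD : A ≤ D) :
    cfc g A ≤ cfc g D := by
  obtain ⟨m, v, hv⟩ := Matrix.posSemidef_iff_eq_sum_vecMulVec.mp (Matrix.le_iff.mp hAD)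
  obtain rfl : D = A + ∑ i, vecMulVec (v i) (star (v i)) := by rw [← hv]; abel
  clear hv hAD
  induction m with
  | zero => simp
  | succ m ih =>
    rw [Fin.sum_univ_castSucc, ← add_assoc]
    exact (ih fun i => v i.castSucc).trans (hf.cfc_le_cfc_add_vecMulVec hf0 hfpos hg
      (hA.add_posSemidef (posSemidef_sum _ fun i _ => posSemidef_vecMulVec_self_star _)) _)

/-- The quotient `t / f t`, set to be zero at zero, increases under strictly positive
perturbations, even when it is discontinuous at zero. -/
theorem NConcaveOn.cfc_div_le_cfc_div_add_smul_one {f g : ℝ → ℝ}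
    (hf : NConcaveOn (n + 1) f (Set.Ici 0)) (hf0 : 0 ≤ f 0)
    (hfpos : ∀ t : ℝ, 0 < t → 0 < f t) (hg : ∀ t : ℝ, 0 < t → g t = t / f t) (hg0 : g 0 = 0)
    {A D : Matrix (Fin n) (Fin n) ℂ} (hA : A.PosSemidef) (hAD : A ≤ D) {ε : ℝ} (hε : 0 < ε) :
    cfc g A ≤ cfc g (D + algebraMap ℝ _ ε) := by
  have hεp : (algebraMap ℝ (Matrix (Fin n) (Fin n) ℂ) ε).PosDef := by
    rw [Algebra.algebraMap_eq_smul_one]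
    exact Matrix.PosDef.one.smul hε
  refine le_trans ?_ (hf.cfc_div_le_cfc_div hf0 hfpos hg (hεp.posSemidef_add hA)
    (add_le_add_left hAD _))
  have hcomp : cfc g (A + algebraMap ℝ _ ε) = cfc (fun t => g (t + ε)) A := by
    have h1 : A + algebraMap ℝ _ ε = cfc (fun t => t + ε) A := by
      rw [cfc_add_const ε (fun t => t) A (continuousOn_id) hA.1.isSelfAdjoint,
        cfc_id' ℝ A hA.1.isSelfAdjoint]
    rw [h1, ← cfc_comp' g (fun t => t + ε) A
      ((Matrix.finite_real_spectrum.image _).continuousOn g) (by fun_prop) hA.1.isSelfAdjoint]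
  rw [hcomp]
  refine cfc_mono (fun t ht => ?_) (A.continuousOn_spectrum _) (A.continuousOn_spectrum _)
  have ht0 := hA.nonneg_of_mem_spectrum ht
  have htε : 0 < t + ε := by linarith
  have hfε := hfpos _ htε
  rw [hg _ htε]
  rcases ht0.eq_or_lt with rfl | ht1
  · rw [hg0]
    positivity
  · have hft := hfpos t ht1
    rw [hg t ht1, div_le_div_iff₀ hft hfε]
    have hc := hf.concaveOn.2 (Set.mem_Ici.mpr htε.le) (Set.self_mem_Ici (a := (0 : ℝ)))
      (div_nonneg ht0 htε.le) (div_nonneg hε.le htε.le) (by field_simp)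
    have e : (t / (t + ε)) • (t + ε) + (ε / (t + ε)) • (0 : ℝ) = t := by
      simp only [smul_eq_mul]
      field_simp
      ring
    rw [e] at hc
    have h2 : 0 ≤ (ε / (t + ε)) • f 0 := by
      rw [smul_eq_mul]
      positivity
    have h3 : t / (t + ε) * f (t + ε) ≤ f t := by
      rw [smul_eq_mul] at hc
      linarith
    rw [div_mul_eq_mul_div, div_le_iff₀ htε] at h3
    linarith

theorem Matrix.PosSemidef.trace_mul_le_trace_mul {k : Type*} [Fintype k] [DecidableEq k]
    {F X Y : Matrix k k ℂ} (hF : F.PosSemidef) (hXY : X ≤ Y) :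
    (F * X).trace ≤ (F * Y).trace := by
  obtain ⟨R, rfl⟩ := CStarAlgebra.nonneg_iff_eq_star_mul_self.mp hF.nonneg
  rw [← sub_nonneg, ← Matrix.trace_sub, ← Matrix.mul_sub, Matrix.mul_assoc, Matrix.trace_mul_comm]
  exact ((Matrix.le_iff.mp hXY).mul_mul_conjTranspose_same R).trace_nonneg

end Helpers

/-- Generalized Powers–Størmer inequality: if `f : [0, ∞) → ℝ` is continuous and
`(n+1)`-concave with `f(0) ≥ 0` and `f(t) > 0` for `t > 0`, and `g(t) = t / f(t)` for
`t > 0`, `g(0) = 0`, then for all positive semidefinite `A, B ∈ Mₙ(ℂ)`: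
`Tr(A) + Tr(B) − Tr(|A − B|) ≤ 2 Tr(f(A)^{1/2} g(B) f(A)^{1/2})`, where
`|A − B| = (√|·|)` is applied via `cfc` and `f(A)^{1/2} = (√f)(A)`. -/
theorem generalized_powers_stormer
    (n : ℕ) (hn : 1 ≤ n) (f : ℝ → ℝ)
    (hfc : ContinuousOn f (Set.Ici 0))
    (hconc : NConcaveOn (n + 1) f (Set.Ici 0))
    (hf0 : 0 ≤ f 0)
    (hfpos : ∀ t : ℝ, 0 < t → 0 < f t)
    (g : ℝ → ℝ)
    (hg : ∀ t : ℝ, 0 < t → g t = t / f t)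
    (hg0 : g 0 = 0)
    (A B : Matrix (Fin n) (Fin n) ℂ) (hA : A.PosSemidef) (hB : B.PosSemidef) :
    A.trace + B.trace - (cfc (fun t : ℝ => |t|) (A - B)).trace ≤
      2 * (cfc (fun t => Real.sqrt (f t)) A * cfc g B *
        cfc (fun t => Real.sqrt (f t)) A).trace := by
  have hfnn : ∀ t : ℝ, 0 ≤ t → 0 ≤ f t := fun t ht =>
    ht.eq_or_lt.elim (fun h => h ▸ hf0) fun h => (hfpos t h).le
  have hfg : ∀ t : ℝ, 0 ≤ t → f t * g t = t := fun t ht => by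
    rcases ht.eq_or_lt with rfl | ht
    · rw [hg0, mul_zero]
    · rw [hg t ht, mul_div_cancel₀ _ (hfpos t ht).ne']
  have hmul : ∀ X : Matrix (Fin n) (Fin n) ℂ, X.PosSemidef → cfc f X * cfc g X = X := by
    intro X hX
    rw [← Matrix.cfc_mul']
    nth_rw 2 [← cfc_id' ℝ X hX.1.isSelfAdjoint]
    exact cfc_congr fun t ht => hfg t (hX.nonneg_of_mem_spectrum ht)
  have hfX : ∀ X : Matrix (Fin n) (Fin n) ℂ, X.PosSemidef → (cfc f X).PosSemidef :=
    fun X hX => Matrix.cfc_posSemidef fun t ht => hfnn t (hX.nonneg_of_mem_spectrum ht)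
  have hgX : ∀ X : Matrix (Fin n) (Fin n) ℂ, X.PosSemidef → (cfc g X).PosSemidef :=
    fun X hX => Matrix.cfc_posSemidef fun t ht => by
      rcases (hX.nonneg_of_mem_spectrum ht).eq_or_lt with rfl | ht
      · exact hg0.ge
      · rw [hg t ht]
        exact (div_pos ht (hfpos t ht)).le
  have hrhs : (cfc (fun t => Real.sqrt (f t)) A * cfc g B *
      cfc (fun t => Real.sqrt (f t)) A).trace = (cfc f A * cfc g B).trace := by
    rw [Matrix.trace_mul_comm, ← Matrix.mul_assoc, ← Matrix.cfc_mul']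
    congr 2
    exact cfc_congr fun t ht => Real.mul_self_sqrt (hfnn t (hA.nonneg_of_mem_spectrum ht))
  rw [hrhs]
  have hAB : (A - B).IsHermitian := hA.1.sub hB.1
  set P := cfc (fun t : ℝ => max t 0) (A - B)
  set Q := cfc (fun t : ℝ => max (-t) 0) (A - B)
  have hP : P.PosSemidef := Matrix.cfc_posSemidef fun t _ => le_max_right _ _
  have hQ : Q.PosSemidef := Matrix.cfc_posSemidef fun t _ => le_max_right _ _
  have hPQ : A + Q = B + P := by
    have h : A - B + Q = P := by
      nth_rw 1 [← cfc_id' ℝ (A - B) hAB.isSelfAdjoint]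
      rw [← cfc_add (A - B) _ _ (Matrix.continuousOn_spectrum _ _)
        (Matrix.continuousOn_spectrum _ _)]
      refine cfc_congr fun t _ => ?_
      rcases le_total t 0 with h | h <;> simp [h]
    rw [← h]
    abel
  have habs : cfc (fun t : ℝ => |t|) (A - B) = P + Q := by
    rw [← cfc_add (A - B) _ _ (Matrix.continuousOn_spectrum _ _)
      (Matrix.continuousOn_spectrum _ _)]
    refine cfc_congr fun t _ => ?_
    rcases le_total t 0 with h | h <;> simp [h, abs_of_nonneg, abs_of_nonpos]
  have htr := congrArg Matrix.trace hPQ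
  rw [Matrix.trace_add, Matrix.trace_add] at htr
  rw [habs, Matrix.trace_add]
  have key : ∀ ε : ℝ, 0 < ε →
      A.trace - (cfc f A * cfc g B).trace ≤
        P.trace + (algebraMap ℝ (Matrix (Fin n) (Fin n) ℂ) ε).trace := by
    intro ε hε
    have hεp : (algebraMap ℝ (Matrix (Fin n) (Fin n) ℂ) ε).PosSemidef := by
      rw [Algebra.algebraMap_eq_smul_one]
      exact Matrix.PosSemidef.one.smul hε.le
    set D := A + Q + algebraMap ℝ (Matrix (Fin n) (Fin n) ℂ) ε with hD
    have hDp : D.PosSemidef := (hA.add hQ).add hεp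
    have hgA := hconc.cfc_div_le_cfc_div_add_smul_one hf0 hfpos hg hg0 hA (D := A + Q)
      (Matrix.le_iff.mpr (by simpa using hQ)) hε
    have hgB := hconc.cfc_div_le_cfc_div_add_smul_one hf0 hfpos hg hg0 hB (D := A + Q)
      (Matrix.le_iff.mpr (by simpa [hPQ] using hP)) hε
    have hfA := hconc.cfc_le_cfc hfnn hA (D := D)
      (Matrix.le_iff.mpr (by simpa [hD, add_assoc] using hQ.add hεp))
    have hfB := hconc.cfc_le_cfc hfnn hB (D := D)
      (Matrix.le_iff.mpr (by simpa [hD, hPQ, add_assoc] using hP.add hεp))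
    rw [← hD] at hgA hgB
    have i1 := (hfX A hA).trace_mul_le_trace_mul hgA
    have i2 := (Matrix.le_iff.mp hgB).trace_mul_le_trace_mul hfA
    have i3 := (hgX B hB).trace_mul_le_trace_mul hfB
    rw [hmul A hA] at i1
    rw [Matrix.trace_mul_comm, Matrix.trace_mul_comm _ (cfc f D), Matrix.mul_sub, Matrix.mul_sub,
      Matrix.trace_sub, Matrix.trace_sub, hmul D hDp] at i2
    rw [Matrix.trace_mul_comm, Matrix.trace_mul_comm _ (cfc f D), hmul B hB] at i3
    have hDt : D.trace = B.trace + P.trace +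
        (algebraMap ℝ (Matrix (Fin n) (Fin n) ℂ) ε).trace := by
      rw [hD, hPQ, Matrix.trace_add, Matrix.trace_add]
    rw [hDt] at i2
    linear_combination i1 + i2 + i3
  have hlim : Filter.Tendsto (fun ε : ℝ =>
      P.trace + (algebraMap ℝ (Matrix (Fin n) (Fin n) ℂ) ε).trace)
      (nhdsWithin 0 (Set.Ioi 0)) (nhds P.trace) := by
    refine Filter.Tendsto.mono_left ?_ nhdsWithin_le_nhds
    have hc : Continuous (fun ε : ℝ =>
        P.trace + (algebraMap ℝ (Matrix (Fin n) (Fin n) ℂ) ε).trace) := by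
      simp only [Algebra.algebraMap_eq_smul_one]
      fun_prop
    simpa using hc.tendsto 0
  have hfin : A.trace - (cfc f A * cfc g B).trace ≤ P.trace :=
    ge_of_tendsto hlim (by
      filter_upwards [self_mem_nhdsWithin] with ε hε using key ε hε)
  linear_combination 2 * hfin - htr
end

section
/- Let f be a strictly positive continuous function on (0, ∞) and suppose g(t) = t / f(t) is differentiable on (0, ∞). Fix s ∈ [0, 1] and define the positive linear functional φ on M₂(ℂ) by φ(X) = Tr(diag(s, 1) · X). Suppose that φ(A) ≤ φ(f(A)^{1/2} g(B) f(A)^{1/2}) for all positive definite Hermitian matrices A, B ∈ M₂(ℂ) with A ≤ B. Then for all λ > μ > 0: √(g'(λ) g'(μ)) · (λ − μ) ≥ ((1 − s)/(1 + s)) · (g(λ) − g(μ)). -/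
open Matrix
open scoped ComplexOrder

/-- If `A` is annihilated by `(X - a)(X - b)`, then `h(A)` is the value at `A` of the affine
interpolation of `h` at `a` and `b`. The case `a = b` is covered, with slope `0`. -/
theorem cfc_eq_interpolation {n : Type*} [Fintype n] [DecidableEq n] [Nonempty n]
    {A : Matrix n n ℂ} (hA : A.IsHermitian) {a b : ℝ}
    (hab : A * A = (a + b) • A - (a * b) • (1 : Matrix n n ℂ)) (h : ℝ → ℝ) :
    cfc h A = ((h a - h b) / (a - b)) • A +
      (h a - (h a - h b) / (a - b) * a) • (1 : Matrix n n ℂ) := by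
  have hsa : IsSelfAdjoint A := hA
  have hspec : ∀ x ∈ spectrum ℝ A, x = a ∨ x = b := by
    intro x hx
    have h1 := spectrum.subset_polynomial_aeval A
      ((Polynomial.X - Polynomial.C a) * (Polynomial.X - Polynomial.C b) : Polynomial ℝ)
      ⟨x, hx, rfl⟩
    have h2 : Polynomial.aeval A
        ((Polynomial.X - Polynomial.C a) * (Polynomial.X - Polynomial.C b) : Polynomial ℝ) = 0 := by
      simp only [map_mul, map_sub, Polynomial.aeval_X, Polynomial.aeval_C,
        Algebra.algebraMap_eq_smul_one, sub_mul, mul_sub, hab, smul_mul_assoc, mul_smul_comm,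
        one_mul, mul_one]
      module
    rw [h2, spectrum.zero_eq] at h1
    simpa [sub_eq_zero] using h1
  have hcongr : cfc h A =
      cfc (fun x => (h a - h b) / (a - b) * x + (h a - (h a - h b) / (a - b) * a)) A := by
    refine cfc_congr fun x hx => ?_
    rcases hspec x hx with rfl | rfl
    · ring
    · by_cases hne : a - x = 0
      · rw [sub_eq_zero.1 hne]; ring
      · field_simp
        ring
  rw [hcongr, cfc_add_const _ _ _ (by fun_prop) hsa, cfc_const_mul _ _ _ (by fun_prop),
    cfc_id' ℝ A hsa, Algebra.algebraMap_eq_smul_one]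

theorem HasDerivAt.nonneg_of_forall_pos_le {F : ℝ → ℝ} {F' : ℝ} (hF : HasDerivAt F F' 0)
    (hle : ∀ t, 0 < t → F 0 ≤ F t) : 0 ≤ F' := by
  refine ge_of_tendsto hF.tendsto_slope_zero_right ?_
  filter_upwards [self_mem_nhdsWithin] with t ht
  have ht : 0 < t := ht
  have := hle t ht
  simp only [zero_add, smul_eq_mul]
  exact mul_nonneg (by positivity) (by linarith)

theorem hasDerivAt_interpolation {g b₁ b₂ P : ℝ → ℝ} {p r l m P' : ℝ} (Q : ℝ)
    (h₁ : HasDerivAt b₁ p 0) (h₂ : HasDerivAt b₂ r 0) (hP : HasDerivAt P P' 0)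
    (hl : b₁ 0 = l) (hm : b₂ 0 = m) (hlm : l ≠ m)
    (hgl : DifferentiableAt ℝ g l) (hgm : DifferentiableAt ℝ g m) :
    HasDerivAt
      (fun t => (g (b₁ t) - g (b₂ t)) / (b₁ t - b₂ t) * P t +
        (g (b₁ t) - (g (b₁ t) - g (b₂ t)) / (b₁ t - b₂ t) * b₁ t) * Q)
      (((deriv g l * p - deriv g m * r) * (l - m) - (g l - g m) * (p - r)) / (l - m) ^ 2 *
          (P 0 - l * Q) + (g l - g m) / (l - m) * (P' - p * Q) + deriv g l * p * Q) 0 := by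
  subst hl hm
  have hg₁ := hgl.hasDerivAt.comp 0 h₁
  have hg₂ := hgm.hasDerivAt.comp 0 h₂
  have hα := (hg₁.sub hg₂).div (h₁.sub h₂) (sub_ne_zero.2 hlm)
  have := (hα.mul hP).add ((hg₁.sub (hα.mul h₁)).mul_const Q)
  refine this.congr_deriv ?_
  simp
  ring

/-- The real symmetric matrix `!![(l + m) / 2, (l - m) / 2; (l - m) / 2, (l + m) / 2]`, with
eigenvalues `l` on `(1, 1)` and `m` on `(1, -1)`, over the complex numbers. -/
noncomputable def swapMatrix (l m : ℝ) : Matrix (Fin 2) (Fin 2) ℂ :=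
  !![((l : ℂ) + m) / 2, ((l : ℂ) - m) / 2; ((l : ℂ) - m) / 2, ((l : ℂ) + m) / 2]

/-- The vector `(x, y)` written in the eigenbasis of `swapMatrix`, up to a factor `√2`. -/
def swapVec (x y : ℝ) : Fin 2 → ℂ := ![(x : ℂ) + y, (x : ℂ) - y]

theorem vecMulVec_swapVec (x y : ℝ) :
    vecMulVec (swapVec x y) (star (swapVec x y)) =
      !![((x : ℂ) + y) ^ 2, ((x : ℂ) + y) * (x - y);
        ((x : ℂ) + y) * (x - y), ((x : ℂ) - y) ^ 2] := by
  ext i j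
  rw [vecMulVec_apply]
  fin_cases i <;> fin_cases j <;> simp [swapVec] <;> ring

/-- The rank one perturbation of `swapMatrix l m` in the direction of `swapVec x y`. -/
noncomputable def swapPerturb (l m x y t : ℝ) : Matrix (Fin 2) (Fin 2) ℂ :=
  swapMatrix l m + (t / 2) • vecMulVec (swapVec x y) (star (swapVec x y))

theorem swapPerturb_sub_posSemidef (l m x y : ℝ) {t : ℝ} (ht : 0 ≤ t) :
    (swapPerturb l m x y t - swapMatrix l m).PosSemidef := by
  rw [swapPerturb, add_sub_cancel_left]
  exact (posSemidef_vecMulVec_self_star _).smul (by positivity)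

theorem swapMatrix_posDef {l m : ℝ} (hm : 0 < m) (hl : m < l) : (swapMatrix l m).PosDef := by
  have : swapMatrix l m = m • (1 : Matrix (Fin 2) (Fin 2) ℂ) +
      ((l - m) / 2) • vecMulVec (swapVec 1 0) (star (swapVec 1 0)) := by
    rw [vecMulVec_swapVec]
    ext i j
    fin_cases i <;> fin_cases j <;> simp [swapMatrix] <;> ring
  rw [this]
  exact (PosDef.one.smul hm).add_posSemidef
    ((posSemidef_vecMulVec_self_star _).smul (by linarith))

theorem swapPerturb_posDef {l m : ℝ} (hm : 0 < m) (hl : m < l) (x y : ℝ) {t : ℝ} (ht : 0 ≤ t) :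
    (swapPerturb l m x y t).PosDef := by
  have := (swapMatrix_posDef hm hl).add_posSemidef (swapPerturb_sub_posSemidef l m x y ht)
  rwa [add_sub_cancel] at this

theorem cfc_swapMatrix {l m : ℝ} (hm : 0 < m) (hl : m < l) (h : ℝ → ℝ) :
    cfc h (swapMatrix l m) = swapMatrix (h l) (h m) := by
  rw [cfc_eq_interpolation (swapMatrix_posDef hm hl).isHermitian (a := l) (b := m) ?_ h]
  · have : (l : ℂ) - m ≠ 0 := by exact_mod_cast (sub_pos.2 hl).ne'
    ext i j
    fin_cases i <;> fin_cases j <;> simp [swapMatrix] <;> field_simp <;> ring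
  · ext i j
    fin_cases i <;> fin_cases j <;> simp [swapMatrix, Matrix.mul_apply] <;> ring

/-- Half the gap between the eigenvalues of `swapPerturb l m x y t`. -/
noncomputable def halfGap (l m x y t : ℝ) : ℝ :=
  Real.sqrt (((l - m + t * (x ^ 2 - y ^ 2)) / 2) ^ 2 + (t * (x * y)) ^ 2)

/-- The mean of the eigenvalues of `swapPerturb l m x y t`. -/
noncomputable def midpointEig (l m x y t : ℝ) : ℝ := (l + m + t * (x ^ 2 + y ^ 2)) / 2

theorem swapPerturb_mul_self (l m x y t : ℝ) :
    swapPerturb l m x y t * swapPerturb l m x y t =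
      ((midpointEig l m x y t + halfGap l m x y t) +
        (midpointEig l m x y t - halfGap l m x y t)) • swapPerturb l m x y t -
      ((midpointEig l m x y t + halfGap l m x y t) *
        (midpointEig l m x y t - halfGap l m x y t)) • (1 : Matrix (Fin 2) (Fin 2) ℂ) := by
  have hw : halfGap l m x y t ^ 2 =
      ((l - m + t * (x ^ 2 - y ^ 2)) / 2) ^ 2 + (t * (x * y)) ^ 2 :=
    Real.sq_sqrt (by positivity)
  have hprod : (midpointEig l m x y t + halfGap l m x y t) *
      (midpointEig l m x y t - halfGap l m x y t) =
      midpointEig l m x y t ^ 2 -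
        (((l - m + t * (x ^ 2 - y ^ 2)) / 2) ^ 2 + (t * (x * y)) ^ 2) := by
    rw [← hw]; ring
  rw [hprod, add_add_sub_cancel]
  ext i j
  fin_cases i <;> fin_cases j <;>
    simp [swapPerturb, swapMatrix, midpointEig, vecMulVec_swapVec, Matrix.mul_apply] <;>
    ring

theorem hasDerivAt_halfGap {l m : ℝ} (hl : m < l) (x y : ℝ) :
    HasDerivAt (halfGap l m x y) ((x ^ 2 - y ^ 2) / 2) 0 := by
  have h₁ : HasDerivAt (fun t : ℝ => (l - m + t * (x ^ 2 - y ^ 2)) / 2)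
      ((1 * (x ^ 2 - y ^ 2)) / 2) 0 :=
    (((hasDerivAt_id (0 : ℝ)).mul_const _).const_add _).div_const 2
  have h₂ : HasDerivAt (fun t : ℝ => t * (x * y)) (1 * (x * y)) 0 :=
    (hasDerivAt_id (0 : ℝ)).mul_const _
  have hpos : 0 < l - m := sub_pos.2 hl
  have h := ((h₁.pow 2).add (h₂.pow 2)).sqrt
    (by simp only [Pi.add_apply, Pi.pow_apply]; simp [hpos.ne'])
  refine h.congr_deriv ?_
  have hs : Real.sqrt (((l - m) / 2) ^ 2) = (l - m) / 2 := Real.sqrt_sq (by linarith)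
  simp [hs]
  field_simp

theorem halfGap_zero {l m : ℝ} (hl : m < l) (x y : ℝ) : halfGap l m x y 0 = (l - m) / 2 := by
  simp only [halfGap, zero_mul, add_zero, ne_eq, OfNat.ofNat_ne_zero, not_false_eq_true, zero_pow]
  exact Real.sqrt_sq (by linarith)

theorem hasDerivAt_midpointEig (l m x y : ℝ) :
    HasDerivAt (midpointEig l m x y) ((x ^ 2 + y ^ 2) / 2) 0 :=
  ((((hasDerivAt_id (0 : ℝ)).mul_const (x ^ 2 + y ^ 2)).const_add (l + m)).div_const 2).congr_deriv
    (by rw [one_mul])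

theorem trace_diagonal_mul_swapMatrix (s l m : ℝ) :
    (Matrix.diagonal ![(s : ℂ), 1] * swapMatrix l m).trace =
      (((1 + s) / 2 * (l + m) : ℝ) : ℂ) := by
  simp [Matrix.trace_fin_two, swapMatrix]
  ring

theorem trace_diagonal_mul_conj_swapPerturb (s u v l m x y t c d : ℝ) :
    (Matrix.diagonal ![(s : ℂ), 1] * (swapMatrix u v *
      (c • swapPerturb l m x y t + d • (1 : Matrix (Fin 2) (Fin 2) ℂ)) * swapMatrix u v)).trace =
      ((c * ((1 + s) / 2 * (u ^ 2 * (l + t * x ^ 2) + v ^ 2 * (m + t * y ^ 2)) -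
        (1 - s) * (u * v) * (t * (x * y))) + d * ((1 + s) / 2 * (u ^ 2 + v ^ 2)) : ℝ) : ℂ) := by
  rw [Matrix.trace_fin_two, Matrix.diagonal_mul, Matrix.diagonal_mul]
  simp only [Matrix.mul_apply, Fin.sum_univ_two]
  simp [swapMatrix, swapPerturb, vecMulVec_swapVec]
  ring

/-- Let `f` be strictly positive and continuous on `(0, ∞)` and `g(t) = t / f(t)` be
differentiable on `(0, ∞)`.  Fix `s ∈ [0, 1]` and let `φ(X) = Tr(diag(s, 1) · X)` on
`M₂(ℂ)`.  If `φ(A) ≤ φ(f(A)^{1/2} g(B) f(A)^{1/2})` for all positive definite Hermitian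
`A ≤ B` in `M₂(ℂ)`, then for all `λ > μ > 0`:
`√(g'(λ) g'(μ)) (λ − μ) ≥ ((1 − s)/(1 + s)) (g(λ) − g(μ))`. -/
theorem trace_property_necessary_condition
    (f : ℝ → ℝ)
    (hfc : ContinuousOn f (Set.Ioi 0))
    (hfpos : ∀ t : ℝ, 0 < t → 0 < f t)
    (g : ℝ → ℝ)
    (hg : ∀ t : ℝ, 0 < t → g t = t / f t)
    (hgd : ∀ t : ℝ, 0 < t → DifferentiableAt ℝ g t)
    (s : ℝ) (hs : s ∈ Set.Icc (0 : ℝ) 1)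
    (hineq : ∀ A B : Matrix (Fin 2) (Fin 2) ℂ, A.PosDef → B.PosDef →
      (B - A).PosSemidef →
      (Matrix.diagonal ![(s : ℂ), 1] * A).trace ≤
        (Matrix.diagonal ![(s : ℂ), 1] *
          (cfc (fun t => Real.sqrt (f t)) A * cfc g B *
            cfc (fun t => Real.sqrt (f t)) A)).trace) :
    ∀ lam mu : ℝ, 0 < mu → mu < lam →
      Real.sqrt (deriv g lam * deriv g mu) * (lam - mu) ≥
        ((1 - s) / (1 + s)) * (g lam - g mu) := by
  intro l m hm hl
  obtain ⟨hs0, hs1⟩ := hs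
  have hl0 : 0 < l := hm.trans hl
  have hlm : 0 < l - m := sub_pos.2 hl
  have hu : 0 < √(f l) := Real.sqrt_pos.2 (hfpos l hl0)
  have hv : 0 < √(f m) := Real.sqrt_pos.2 (hfpos m hm)
  have hul : √(f l) ^ 2 * g l = l := by
    rw [Real.sq_sqrt (hfpos l hl0).le, hg l hl0, mul_div_cancel₀ _ (hfpos l hl0).ne']
  have hvm : √(f m) ^ 2 * g m = m := by
    rw [Real.sq_sqrt (hfpos m hm).le, hg m hm, mul_div_cancel₀ _ (hfpos m hm).ne']
  have hform : ∀ x y : ℝ, 0 ≤ (1 + s) / 2 * (√(f l) ^ 2 * deriv g l * x ^ 2 +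
      √(f m) ^ 2 * deriv g m * y ^ 2) -
        (1 - s) * (√(f l) * √(f m)) * ((g l - g m) / (l - m)) * (x * y) := by
    intro x y
    have hb₁ := (hasDerivAt_midpointEig l m x y).add (hasDerivAt_halfGap hl x y)
    have hb₂ := (hasDerivAt_midpointEig l m x y).sub (hasDerivAt_halfGap hl x y)
    have hb₁0 : (midpointEig l m x y + halfGap l m x y) 0 = l := by
      simp only [Pi.add_apply, halfGap_zero hl, midpointEig]; ring
    have hb₂0 : (midpointEig l m x y - halfGap l m x y) 0 = m := by
      simp only [Pi.sub_apply, halfGap_zero hl, midpointEig]; ring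
    have hP : HasDerivAt (fun t : ℝ => (1 + s) / 2 * (√(f l) ^ 2 * (l + t * x ^ 2) +
        √(f m) ^ 2 * (m + t * y ^ 2)) - (1 - s) * (√(f l) * √(f m)) * (t * (x * y)))
        ((1 + s) / 2 * (√(f l) ^ 2 * (1 * x ^ 2) + √(f m) ^ 2 * (1 * y ^ 2)) -
          (1 - s) * (√(f l) * √(f m)) * (1 * (x * y))) 0 :=
      ((((((hasDerivAt_id (0 : ℝ)).mul_const _).const_add _).const_mul _).add
        ((((hasDerivAt_id (0 : ℝ)).mul_const _).const_add _).const_mul _)).const_mul _).sub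
        (((hasDerivAt_id (0 : ℝ)).mul_const _).const_mul _)
    have hF := hasDerivAt_interpolation ((1 + s) / 2 * (√(f l) ^ 2 + √(f m) ^ 2)) hb₁ hb₂ hP
      hb₁0 hb₂0 hl.ne' (hgd l hl0) (hgd m hm)
    have hF' := hF.nonneg_of_forall_pos_le fun t ht => ?_
    · refine hF'.trans_eq ?_
      field_simp
      ring
    · have h := hineq _ _ (swapMatrix_posDef hm hl) (swapPerturb_posDef hm hl x y ht.le)
        (swapPerturb_sub_posSemidef l m x y ht.le)
      rw [cfc_swapMatrix hm hl,
        cfc_eq_interpolation (swapPerturb_posDef hm hl x y ht.le).isHermitian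
          (swapPerturb_mul_self l m x y t) g, trace_diagonal_mul_conj_swapPerturb,
        trace_diagonal_mul_swapMatrix, Complex.real_le_real] at h
      refine le_trans (le_of_eq ?_) h
      simp only [hb₁0, hb₂0]
      have : (1 + s) / 2 * (l + m) =
          (1 + s) / 2 * (√(f l) ^ 2 * g l + √(f m) ^ 2 * g m) := by rw [hul, hvm]
      rw [this]
      field_simp
      ring
  set k : ℝ := (1 - s) / (1 + s) * ((g l - g m) / (l - m)) with hk
  have hquad : ∀ x y : ℝ, 0 ≤ deriv g l * x ^ 2 + deriv g m * y ^ 2 - 2 * k * (x * y) := by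
    intro x y
    have h := mul_nonneg (by positivity : 0 ≤ 2 / (1 + s)) (hform (x / √(f l)) (y / √(f m)))
    refine h.trans_eq ?_
    rw [hk]
    field_simp
  have hdl : 0 ≤ deriv g l := by simpa using hquad 1 0
  have hdisc : k ^ 2 ≤ deriv g l * deriv g m := by
    have h : discrim (deriv g l) (-(2 * k)) (deriv g m) ≤ 0 :=
      discrim_le_zero fun x => by linarith [hquad x 1]
    rw [discrim] at h
    linarith
  have hkle : k ≤ √(deriv g l * deriv g m) := Real.le_sqrt_of_sq_le hdisc
  calc (1 - s) / (1 + s) * (g l - g m) = k * (l - m) := by rw [hk]; field_simp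
    _ ≤ _ := by gcongr
end
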